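/- Under the MS-LS model with α_i + α_j = α for all pairs i, j, the conditional variance of the nodal strength of a node within state k satisfies Var(Y_t | s_t = k) = e^{2α}(N−1)(8σ_k²β + 1)^{−d/2} + (N−1)(N−2) e^{2α} (2σ_k²β + 1)^{−d/2} (6σ_k²β + 1)^{−d/2} + (N−1) e^α (4σ_k²β + 1)^{−d/2} − (N−1)² e^{2α} (4σ_k²β + 1)^{−d}. -/

import Mathlib

open MeasureTheory ProbabilityTheory Real

noncomputable section

/-- Density of the centered isotropic Gaussian `N(0, σ² I_d)` on `ℝ^d`. -/
def gaussPdf (d : ℕ) (σ2 : ℝ) (x : EuclideanSpace ℝ (Fin d)) : ℝ :=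
  (2 * Real.pi * σ2) ^ (-(d : ℝ) / 2) * Real.exp (-‖x‖ ^ 2 / (2 * σ2))

/-- The centered isotropic Gaussian measure `N(0, σ² I_d)` on `ℝ^d`. -/
def gaussMeasure (d : ℕ) (σ2 : ℝ) : Measure (EuclideanSpace ℝ (Fin d)) :=
  volume.withDensity fun x => ENNReal.ofReal (gaussPdf d σ2 x)

/-- Unordered pairs of distinct nodes, represented as ordered pairs `(i, j)` with `i < j`. -/
abbrev Pairs (N : ℕ) : Type := {p : Fin N × Fin N // p.1 < p.2}

/-- Joint law of the latent positions `(Z_i)_{i}` (i.i.d. `N(0, σ² I_d)`) and of the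
edge weights `(Y_{ij})_{i<j}`, which given the latent positions are conditionally independent
Poisson variables with intensity `exp (α_i + α_j - β ‖Z_i - Z_j‖²)`. -/
def jointLaw (d N : ℕ) (β : ℝ) (α : Fin N → ℝ) (σ2 : ℝ) :
    Measure ((Fin N → EuclideanSpace ℝ (Fin d)) × (Pairs N → ℕ)) :=
  (volume.withDensity fun z : Fin N → EuclideanSpace ℝ (Fin d) =>
      ENNReal.ofReal (∏ i, gaussPdf d σ2 (z i))).bind fun z =>
    (Measure.pi fun p : Pairs N =>
        poissonMeasure
          (Real.exp (α p.1.1 + α p.1.2 - β * ‖z p.1.1 - z p.1.2‖ ^ 2)).toNNReal).map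
      fun y => (z, y)

/-- The Markov-switching latent space (MS-LS) network model: a hidden `K`-state Markov chain
`s`, state-dependent i.i.d. Gaussian latent positions `Z`, and symmetric edge weights `Y`
that conditionally on the current state (and given the latent positions) are independent
Poisson variables with log-intensity `α i + α j - β ‖Z i k - Z j k‖²`. -/
structure MSLS (Ω : Type) [MeasurableSpace Ω] where
  /-- the underlying probability measure -/
  P : Measure Ω
  isProb : IsProbabilityMeasure P
  /-- the dimension of the latent space -/
  d : ℕ
  /-- the number of nodes -/
  N : ℕ
  /-- the number of states of the hidden Markov chain -/
  K : ℕ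
  β : ℝ
  β_pos : 0 < β
  /-- individual effects -/
  α : Fin N → ℝ
  /-- state-specific variances of the latent positions -/
  σ2 : Fin K → ℝ
  σ2_pos : ∀ k, 0 < σ2 k
  /-- transition probabilities of the hidden Markov chain -/
  q : Fin K → Fin K → ℝ
  q_nonneg : ∀ l k, 0 ≤ q l k
  q_sum : ∀ l, ∑ k, q l k = 1
  /-- the hidden Markov chain -/
  s : ℕ → Ω → Fin K
  s_meas : ∀ t, Measurable (s t)
  /-- the latent positions in each state -/
  Z : Fin N → Fin K → Ω → EuclideanSpace ℝ (Fin d)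
  Z_meas : ∀ i k, Measurable (Z i k)
  /-- the edge weights -/
  Y : Fin N → Fin N → ℕ → Ω → ℕ
  Y_meas : ∀ i j t, Measurable (Y i j t)
  Y_symm : ∀ i j t ω, Y i j t ω = Y j i t ω
  state_pos : ∀ t k, P {ω | s t ω = k} ≠ 0
  /-- Markov transition probabilities -/
  trans_prob : ∀ t l k, ((P[|{ω | s t ω = l}]) {ω | s (t + 1) ω = k}).toReal = q l k
  /-- conditionally on the current state, the latent positions and the edge weights follow
  the Poisson latent space law -/
  cond_law_state : ∀ t k,
    (P[|{ω | s t ω = k}]).map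
        (fun ω => ((fun i => Z i k ω), fun p : Pairs N => Y p.1.1 p.1.2 t ω)) =
      jointLaw d N β α (σ2 k)
  /-- conditionally on the previous and current state, the latent positions and the edge
  weights follow the Poisson latent space law of the current state -/
  cond_law_pair : ∀ t l k, q l k ≠ 0 →
    (P[|{ω | s t ω = l} ∩ {ω | s (t + 1) ω = k}]).map
        (fun ω => ((fun i => Z i k ω), fun p : Pairs N => Y p.1.1 p.1.2 (t + 1) ω)) =
      jointLaw d N β α (σ2 k)

attribute [instance] MSLS.isProb

/-- The nodal strength `Y_{it} = Σ_{j ≠ i} Y_{ijt}` of node `i` at time `t`. -/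
def MSLS.strength {Ω : Type} [MeasurableSpace Ω] (M : MSLS Ω) (i : Fin M.N) (t : ℕ)
    (ω : Ω) : ℕ :=
  ∑ j ∈ Finset.univ.erase i, M.Y i j t ω

end

open scoped ENNReal NNReal

section Poisson

/-- The Stein–Chen identity for the Poisson distribution. -/
lemma lintegral_natCast_mul_poissonMeasure (r : ℝ≥0) (g : ℕ → ℝ≥0∞) :
    ∫⁻ n, (n : ℝ≥0∞) * g n ∂poissonMeasure r = r * ∫⁻ n, g (n + 1) ∂poissonMeasure r := by
  simp only [poissonMeasure, lintegral_sum_measure, lintegral_smul_measure, lintegral_dirac,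
    smul_eq_mul]
  rw [tsum_eq_zero_add' ENNReal.summable, ← ENNReal.tsum_mul_left]
  simp only [Nat.cast_zero, zero_mul, mul_zero, zero_add]
  refine tsum_congr fun n => ?_
  have h : ENNReal.ofReal (rexp (-r) * r ^ (n + 1) / ((n + 1).factorial : ℝ)) *
        ((n + 1 : ℕ) : ℝ≥0∞)
      = r * ENNReal.ofReal (rexp (-r) * r ^ n / (n.factorial : ℝ)) := by
    rw [← ENNReal.ofReal_natCast, ← ENNReal.ofReal_coe_nnreal,
      ← ENNReal.ofReal_mul (by positivity), ← ENNReal.ofReal_mul (by positivity)]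
    congr 1
    rw [Nat.factorial_succ]
    push_cast
    field_simp
    ring
  rw [← mul_assoc, h, mul_assoc]

lemma lintegral_natCast_poissonMeasure (r : ℝ≥0) :
    ∫⁻ n, (n : ℝ≥0∞) ∂poissonMeasure r = r := by
  simpa using lintegral_natCast_mul_poissonMeasure r 1

lemma lintegral_natCast_mul_self_poissonMeasure (r : ℝ≥0) :
    ∫⁻ n, (n : ℝ≥0∞) * n ∂poissonMeasure r = r * r + r := by
  rw [lintegral_natCast_mul_poissonMeasure]
  simp only [Nat.cast_add, Nat.cast_one]
  rw [lintegral_add_right _ measurable_const, lintegral_natCast_poissonMeasure]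
  simp [mul_add]

lemma measurable_natCast_eval {P : Type*} (p : P) :
    Measurable fun y : P → ℕ => (y p : ℝ≥0∞) :=
  (measurable_from_nat (f := fun n => (n : ℝ≥0∞))).comp (measurable_pi_apply p)

variable {P ι : Type*} [Fintype P] [Fintype ι]

lemma lintegral_eval_pi {X : P → Type*} [∀ p, MeasurableSpace (X p)] (μ : ∀ p, Measure (X p))
    [∀ p, IsProbabilityMeasure (μ p)] (p : P) {f : X p → ℝ≥0∞} (hf : Measurable f) :
    ∫⁻ y, f (y p) ∂Measure.pi μ = ∫⁻ x, f x ∂μ p :=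
  (measurePreserving_eval μ p).lintegral_comp hf

lemma lintegral_sum_pi_poissonMeasure (r : P → ℝ≥0) (e : ι → P) :
    ∫⁻ y, ∑ j, (y (e j) : ℝ≥0∞) ∂Measure.pi (fun p => poissonMeasure (r p)) =
      ∑ j, (r (e j) : ℝ≥0∞) := by
  rw [lintegral_finsetSum _ fun j _ => measurable_natCast_eval (e j)]
  refine Finset.sum_congr rfl fun j _ => ?_
  rw [lintegral_eval_pi (fun p => poissonMeasure (r p)) (e j) (f := fun n => (n : ℝ≥0∞))
    measurable_from_nat, lintegral_natCast_poissonMeasure]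

lemma lintegral_sum_sq_pi_poissonMeasure (r : P → ℝ≥0) {e : ι → P} (he : e.Injective) :
    ∫⁻ y, (∑ j, (y (e j) : ℝ≥0∞)) ^ 2 ∂Measure.pi (fun p => poissonMeasure (r p)) =
      ∑ j, ∑ k, (r (e j) : ℝ≥0∞) * r (e k) + ∑ j, (r (e j) : ℝ≥0∞) := by
  classical
  have hjk (j k : ι) :
      ∫⁻ y, (y (e j) : ℝ≥0∞) * y (e k) ∂Measure.pi (fun p => poissonMeasure (r p)) =
        (r (e j) : ℝ≥0∞) * r (e k) + if j = k then (r (e j) : ℝ≥0∞) else 0 := by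
    split_ifs with h
    · subst h
      rw [lintegral_eval_pi (fun p => poissonMeasure (r p)) (e j)
        (f := fun n => (n : ℝ≥0∞) * n) measurable_from_nat,
        lintegral_natCast_mul_self_poissonMeasure]
    · have hind : iIndepFun (fun p (y : P → ℕ) => (y p : ℝ≥0∞))
          (Measure.pi fun p => poissonMeasure (r p)) :=
        iIndepFun_pi (μ := fun p => poissonMeasure (r p)) (X := fun _ (n : ℕ) => (n : ℝ≥0∞))
          fun p => measurable_from_nat.aemeasurable
      rw [lintegral_mul_eq_lintegral_mul_lintegral_of_indepFun''
        (measurable_natCast_eval _).aemeasurable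
        (measurable_natCast_eval _).aemeasurable (hind.indepFun (he.ne h)), add_zero]
      congr 1 <;>
      rw [lintegral_eval_pi (fun p => poissonMeasure (r p)) _ (f := fun n => (n : ℝ≥0∞))
        measurable_from_nat, lintegral_natCast_poissonMeasure]
  simp_rw [sq, Finset.sum_mul_sum]
  have hm (j k : ι) : Measurable fun y : P → ℕ => (y (e j) : ℝ≥0∞) * y (e k) :=
    (measurable_natCast_eval _).mul (measurable_natCast_eval _)
  rw [lintegral_finsetSum _ fun j _ => Finset.measurable_sum _ fun k _ => hm j k]
  simp_rw [lintegral_finsetSum _ fun (k : ι) _ => hm _ k, hjk, Finset.sum_add_distrib]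
  simp

end Poisson

section Product

variable {ι E : Type*} [Fintype ι] [MeasurableSpace E] (μ : Measure E) [IsProbabilityMeasure μ]

lemma lintegral_pi_pair {i j : ι} (hij : i ≠ j) {f : E × E → ℝ≥0∞} (hf : Measurable f) :
    ∫⁻ z, f (z i, z j) ∂Measure.pi (fun _ : ι => μ) = ∫⁻ x, ∫⁻ y, f (x, y) ∂μ ∂μ := by
  have hind : iIndepFun (fun i (z : ι → E) => z i) (Measure.pi fun _ : ι => μ) :=
    iIndepFun_pi (X := fun _ => id) fun _ => aemeasurable_id
  have h := (indepFun_iff_map_prod_eq_prod_map_map (measurable_pi_apply i).aemeasurable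
    (measurable_pi_apply j).aemeasurable).1 (hind.indepFun hij)
  simp only [(measurePreserving_eval (fun _ : ι => μ) _).map_eq] at h
  rw [← lintegral_prod _ hf.aemeasurable, ← h, lintegral_map hf (by fun_prop)]

lemma lintegral_pi_triple {i j k : ι} (hij : i ≠ j) (hik : i ≠ k) (hjk : j ≠ k)
    {f : (E × E) × E → ℝ≥0∞} (hf : Measurable f) :
    ∫⁻ z, f ((z i, z j), z k) ∂Measure.pi (fun _ : ι => μ) =
      ∫⁻ x, ∫⁻ y, ∫⁻ w, f ((x, y), w) ∂μ ∂μ ∂μ := by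
  have hind : iIndepFun (fun i (z : ι → E) => z i) (Measure.pi fun _ : ι => μ) :=
    iIndepFun_pi (X := fun _ => id) fun _ => aemeasurable_id
  have h := (indepFun_iff_map_prod_eq_prod_map_map (by fun_prop)
    (measurable_pi_apply k).aemeasurable).1
      (hind.indepFun_prodMk (fun _ => measurable_pi_apply _) i j k hik hjk)
  simp only [(measurePreserving_eval (fun _ : ι => μ) _).map_eq] at h
  have hg : Measurable fun p : E × E => ∫⁻ w, f (p, w) ∂μ := hf.lintegral_prod_right'
  rw [← lintegral_pi_pair μ hij hg, ← lintegral_map hg (g := fun z : ι → E => (z i, z j))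
    (by fun_prop), ← lintegral_prod _ hf.aemeasurable, ← h, lintegral_map hf (by fun_prop)]

end Product

section Gaussian

variable {d : ℕ} {v : ℝ}

lemma continuous_gaussPdf : Continuous (gaussPdf d v) := by
  unfold gaussPdf
  fun_prop

lemma gaussPdf_nonneg (hv : 0 < v) (x : EuclideanSpace ℝ (Fin d)) : 0 ≤ gaussPdf d v x := by
  unfold gaussPdf
  positivity

lemma integrable_rexp_neg_mul_sq_norm_add {V : Type*} [NormedAddCommGroup V]
    [InnerProductSpace ℝ V] [FiniteDimensional ℝ V] [MeasurableSpace V] [BorelSpace V]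
    {b : ℝ} (hb : 0 < b) (c : ℝ) (w : V) :
    Integrable fun x : V => rexp (-b * ‖x‖ ^ 2 + c * inner ℝ w x) := by
  have h := (GaussianFourier.integrable_cexp_neg_mul_sq_norm_add
    (show 0 < (b : ℂ).re from hb) c w).re
  refine h.congr (ae_of_all _ fun x => ?_)
  simp only [RCLike.re_to_complex]
  rw [← Complex.ofReal_re (rexp _)]
  push_cast
  rfl

lemma integral_rexp_neg_mul_sq_norm_add {V : Type*} [NormedAddCommGroup V]
    [InnerProductSpace ℝ V] [FiniteDimensional ℝ V] [MeasurableSpace V] [BorelSpace V]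
    {b : ℝ} (hb : 0 < b) (c : ℝ) (w : V) :
    ∫ x : V, rexp (-b * ‖x‖ ^ 2 + c * inner ℝ w x) =
      (π / b) ^ (Module.finrank ℝ V / 2 : ℝ) * rexp (c ^ 2 * ‖w‖ ^ 2 / (4 * b)) := by
  have h := GaussianFourier.integral_cexp_neg_mul_sq_norm_add
    (show 0 < (b : ℂ).re from hb) c w
  apply Complex.ofReal_injective
  rw [← integral_complex_ofReal]
  push_cast
  rw [h, Complex.ofReal_cpow (by positivity)]
  push_cast
  rfl

lemma gaussPdf_mul_rexp_eq (hv : 0 < v) (c : ℝ) (w x : EuclideanSpace ℝ (Fin d)) :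
    gaussPdf d v x * rexp (-c * ‖x - w‖ ^ 2) =
      (2 * π * v) ^ (-(d : ℝ) / 2) * rexp (-c * ‖w‖ ^ 2) *
        rexp (-((1 + 2 * c * v) / (2 * v)) * ‖x‖ ^ 2 + 2 * c * inner ℝ w x) := by
  rw [gaussPdf, mul_assoc, mul_assoc _ (rexp _) (rexp _), ← Real.exp_add, ← Real.exp_add,
    norm_sub_sq_real, real_inner_comm]
  congr 2
  field_simp
  ring

lemma integrable_gaussPdf_mul_rexp (hv : 0 < v) {c : ℝ} (hc : 0 ≤ c)
    (w : EuclideanSpace ℝ (Fin d)) :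
    Integrable fun x => gaussPdf d v x * rexp (-c * ‖x - w‖ ^ 2) := by
  simp_rw [gaussPdf_mul_rexp_eq hv]
  exact (integrable_rexp_neg_mul_sq_norm_add (by positivity) _ _).const_mul _

lemma integral_gaussPdf_mul_rexp (hv : 0 < v) {c : ℝ} (hc : 0 ≤ c)
    (w : EuclideanSpace ℝ (Fin d)) :
    ∫ x, gaussPdf d v x * rexp (-c * ‖x - w‖ ^ 2) =
      (1 + 2 * c * v) ^ (-(d : ℝ) / 2) * rexp (-(c / (1 + 2 * c * v)) * ‖w‖ ^ 2) := by
  simp_rw [gaussPdf_mul_rexp_eq hv]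
  have hA : 0 < 1 + 2 * c * v := by positivity
  rw [integral_const_mul, integral_rexp_neg_mul_sq_norm_add (by positivity),
    finrank_euclideanSpace_fin, mul_mul_mul_comm, ← Real.exp_add]
  congr 1
  · rw [show π / ((1 + 2 * c * v) / (2 * v)) = 2 * π * v / (1 + 2 * c * v) by field_simp,
      Real.div_rpow (by positivity) hA.le, neg_div, Real.rpow_neg (by positivity),
      Real.rpow_neg hA.le]
    have : (2 * π * v) ^ ((d : ℝ) / 2) ≠ 0 := by positivity
    field_simp
  · congr 1
    field_simp
    ring

lemma integrable_gaussPdf (hv : 0 < v) : Integrable (gaussPdf d v) := by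
  simpa using integrable_gaussPdf_mul_rexp hv le_rfl 0

lemma lintegral_rexp_gaussMeasure (hv : 0 < v) {c : ℝ} (hc : 0 ≤ c)
    (w : EuclideanSpace ℝ (Fin d)) :
    ∫⁻ x, ENNReal.ofReal (rexp (-c * ‖x - w‖ ^ 2)) ∂gaussMeasure d v =
      ENNReal.ofReal
        ((1 + 2 * c * v) ^ (-(d : ℝ) / 2) * rexp (-(c / (1 + 2 * c * v)) * ‖w‖ ^ 2)) := by
  rw [gaussMeasure, lintegral_withDensity_eq_lintegral_mul _
    (continuous_gaussPdf.measurable.ennreal_ofReal) (by fun_prop),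
    ← integral_gaussPdf_mul_rexp hv hc, ofReal_integral_eq_lintegral_ofReal
      (integrable_gaussPdf_mul_rexp hv hc w)
      (ae_of_all _ fun x => mul_nonneg (gaussPdf_nonneg hv x) (Real.exp_nonneg _))]
  simp [ENNReal.ofReal_mul (gaussPdf_nonneg hv _)]

lemma isProbabilityMeasure_gaussMeasure (hv : 0 < v) :
    IsProbabilityMeasure (gaussMeasure d v) := by
  constructor
  simpa using lintegral_rexp_gaussMeasure (d := d) hv le_rfl 0

lemma withDensity_prod_gaussPdf (N : ℕ) (hv : 0 < v) :
    (volume.withDensity fun z : Fin N → EuclideanSpace ℝ (Fin d) =>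
      ENNReal.ofReal (∏ i, gaussPdf d v (z i))) = Measure.pi fun _ => gaussMeasure d v := by
  have := isProbabilityMeasure_gaussMeasure (d := d) hv
  refine (Measure.pi_eq fun s hs => ?_).symm
  have hint (i : Fin N) : Integrable ((s i).indicator (gaussPdf d v)) :=
    (integrable_gaussPdf hv).indicator (hs i)
  have hnn (i : Fin N) : 0 ≤ (s i).indicator (gaussPdf d v) :=
    Set.indicator_nonneg fun x _ => gaussPdf_nonneg hv x
  have hprod (z : Fin N → EuclideanSpace ℝ (Fin d)) :
      (Set.univ.pi s).indicator (fun z => ENNReal.ofReal (∏ i, gaussPdf d v (z i))) z =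
        ENNReal.ofReal (∏ i, (s i).indicator (gaussPdf d v) (z i)) := by
    by_cases h : z ∈ Set.univ.pi s
    · rw [Set.indicator_of_mem h]
      congr 1
      exact Finset.prod_congr rfl fun i _ => (Set.indicator_of_mem (h i trivial) _).symm
    · rw [Set.indicator_of_notMem h]
      simp only [Set.mem_pi, Set.mem_univ, true_imp_iff, not_forall] at h
      obtain ⟨i, hi⟩ := h
      rw [Finset.prod_eq_zero (Finset.mem_univ i) (Set.indicator_of_notMem hi _),
        ENNReal.ofReal_zero]
  rw [withDensity_apply _ (MeasurableSet.univ_pi hs),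
    ← lintegral_indicator (MeasurableSet.univ_pi hs)]
  simp_rw [hprod]
  rw [volume_pi, ← ofReal_integral_eq_lintegral_ofReal (Integrable.fintype_prod hint)
    (ae_of_all _ fun z => Finset.prod_nonneg fun i _ => hnn i _),
    integral_fintype_prod_eq_prod,
    ENNReal.ofReal_prod_of_nonneg fun i _ => integral_nonneg (hnn i)]
  refine Finset.prod_congr rfl fun i _ => ?_
  rw [ofReal_integral_eq_lintegral_ofReal (hint i) (ae_of_all _ (hnn i)), gaussMeasure,
    withDensity_apply _ (hs i), ← lintegral_indicator (hs i)]
  refine lintegral_congr fun x => ?_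
  by_cases h : x ∈ s i <;> simp [h]

lemma lintegral_pi_gaussMeasure_pair {N : ℕ} (hv : 0 < v) {c : ℝ} (hc : 0 ≤ c) {i j : Fin N}
    (hij : i ≠ j) :
    ∫⁻ z, ENNReal.ofReal (rexp (-c * ‖z i - z j‖ ^ 2))
        ∂Measure.pi (fun _ => gaussMeasure d v) =
      ENNReal.ofReal ((1 + 4 * c * v) ^ (-(d : ℝ) / 2)) := by
  have := isProbabilityMeasure_gaussMeasure (d := d) hv
  have hA : 0 < 1 + 2 * c * v := by positivity
  have h := lintegral_rexp_gaussMeasure (d := d) hv (c := c / (1 + 2 * c * v)) (by positivity) 0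
  rw [lintegral_pi_pair (gaussMeasure d v) hij
    (f := fun p => ENNReal.ofReal (rexp (-c * ‖p.1 - p.2‖ ^ 2))) (by fun_prop)]
  have hw (x : EuclideanSpace ℝ (Fin d)) :
      ∫⁻ y, ENNReal.ofReal (rexp (-c * ‖x - y‖ ^ 2)) ∂gaussMeasure d v =
      ENNReal.ofReal ((1 + 2 * c * v) ^ (-(d : ℝ) / 2)) *
        ENNReal.ofReal (rexp (-(c / (1 + 2 * c * v)) * ‖x‖ ^ 2)) := by
    simp_rw [norm_sub_rev x]
    rw [lintegral_rexp_gaussMeasure hv hc, ENNReal.ofReal_mul (Real.rpow_nonneg hA.le _)]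
  simp_rw [hw]
  simp only [sub_zero, norm_zero, ne_eq, OfNat.ofNat_ne_zero, not_false_eq_true, zero_pow,
    mul_zero, Real.exp_zero, mul_one] at h
  rw [lintegral_const_mul _ (by fun_prop), h, ← ENNReal.ofReal_mul (by positivity),
    ← Real.mul_rpow (by positivity) (by positivity)]
  congr 2
  field_simp
  ring

lemma lintegral_pi_gaussMeasure_triple {N : ℕ} (hv : 0 < v) {c : ℝ} (hc : 0 ≤ c)
    {i j k : Fin N} (hij : i ≠ j) (hik : i ≠ k) (hjk : j ≠ k) :
    ∫⁻ z, ENNReal.ofReal (rexp (-c * ‖z i - z j‖ ^ 2)) *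
        ENNReal.ofReal (rexp (-c * ‖z i - z k‖ ^ 2)) ∂Measure.pi (fun _ => gaussMeasure d v) =
      ENNReal.ofReal ((1 + 2 * c * v) ^ (-(d : ℝ) / 2) * (1 + 6 * c * v) ^ (-(d : ℝ) / 2)) := by
  have := isProbabilityMeasure_gaussMeasure (d := d) hv
  have hA : 0 < 1 + 2 * c * v := by positivity
  have h := lintegral_rexp_gaussMeasure (d := d) hv (c := 2 * (c / (1 + 2 * c * v)))
    (by positivity) 0
  rw [lintegral_pi_triple (gaussMeasure d v) hij hik hjk
    (f := fun p => ENNReal.ofReal (rexp (-c * ‖p.1.1 - p.1.2‖ ^ 2)) *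
        ENNReal.ofReal (rexp (-c * ‖p.1.1 - p.2‖ ^ 2))) (by fun_prop)]
  have hw (x : EuclideanSpace ℝ (Fin d)) :
      ∫⁻ y, ∫⁻ w, ENNReal.ofReal (rexp (-c * ‖x - y‖ ^ 2)) *
        ENNReal.ofReal (rexp (-c * ‖x - w‖ ^ 2)) ∂gaussMeasure d v ∂gaussMeasure d v =
      ENNReal.ofReal ((1 + 2 * c * v) ^ (-(d : ℝ) / 2) * (1 + 2 * c * v) ^ (-(d : ℝ) / 2)) *
        ENNReal.ofReal (rexp (-(2 * (c / (1 + 2 * c * v))) * ‖x‖ ^ 2)) := by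
    simp_rw [norm_sub_rev x]
    simp_rw [lintegral_const_mul _ (f := fun w => ENNReal.ofReal (rexp (-c * ‖w - x‖ ^ 2)))
      (by fun_prop), lintegral_rexp_gaussMeasure hv hc]
    rw [lintegral_mul_const _ (by fun_prop), lintegral_rexp_gaussMeasure hv hc,
      ← ENNReal.ofReal_mul (by positivity), ← ENNReal.ofReal_mul (by positivity),
      mul_mul_mul_comm, ← Real.exp_add]
    congr 3
    ring
  simp only [sub_zero, norm_zero, ne_eq, OfNat.ofNat_ne_zero, not_false_eq_true, zero_pow,
    mul_zero, Real.exp_zero, mul_one] at h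
  simp_rw [hw]
  rw [lintegral_const_mul _ (by fun_prop), h, ← ENNReal.ofReal_mul (by positivity), mul_assoc,
    ← Real.mul_rpow (by positivity) (by positivity)]
  congr 3
  field_simp
  ring

end Gaussian

section LatentSpace

/-- The unordered pair formed by two distinct nodes. -/
def Pairs.mk {N : ℕ} {i j : Fin N} (h : i ≠ j) : Pairs N :=
  ⟨(min i j, max i j), min_lt_max.2 h⟩

lemma Pairs.mk_injective {N : ℕ} (i : Fin N) :
    Function.Injective fun j : {j // j ≠ i} => Pairs.mk j.2.symm := by
  rintro ⟨j, hj⟩ ⟨k, hk⟩ h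
  simp only [Pairs.mk, Subtype.mk.injEq, Prod.mk.injEq] at h
  ext
  simp only [Fin.ext_iff, Fin.coe_min, Fin.coe_max] at h
  have hj' := Fin.val_ne_iff.2 hj
  have hk' := Fin.val_ne_iff.2 hk
  simp only
  omega

lemma MSLS.strength_eq_sum {Ω : Type} [MeasurableSpace Ω] (M : MSLS Ω) (i : Fin M.N) (t : ℕ)
    (ω : Ω) :
    M.strength i t ω = ∑ j : {j // j ≠ i},
      M.Y (Pairs.mk j.2.symm).1.1 (Pairs.mk j.2.symm).1.2 t ω := by
  rw [MSLS.strength, Finset.sum_subtype (p := fun j => j ≠ i) _ (by simp)]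
  refine Finset.sum_congr rfl fun j _ => ?_
  rcases le_total i j.1 with h | h
  · simp [Pairs.mk, h]
  · simp [Pairs.mk, h, M.Y_symm i j]

lemma aemeasurable_of_bind_ne_zero {X Y : Type*} [MeasurableSpace X] [MeasurableSpace Y]
    {m : Measure X} {κ : X → Measure Y} (h : m.bind κ ≠ 0) : AEMeasurable κ m := by
  by_contra hκ
  exact h (by rw [Measure.bind, Measure.map_of_not_aemeasurable hκ, Measure.join_zero])

lemma lintegral_jointLaw_snd {d N : ℕ} {β : ℝ} {α : Fin N → ℝ} {v : ℝ} (hv : 0 < v)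
    (h : jointLaw d N β α v ≠ 0) {g : (Pairs N → ℕ) → ℝ≥0∞} (hg : Measurable g) :
    ∫⁻ p, g p.2 ∂jointLaw d N β α v =
      ∫⁻ z, ∫⁻ y, g y ∂Measure.pi (fun p : Pairs N => poissonMeasure
          (Real.exp (α p.1.1 + α p.1.2 - β * ‖z p.1.1 - z p.1.2‖ ^ 2)).toNNReal)
        ∂Measure.pi (fun _ => gaussMeasure d v) := by
  unfold jointLaw at h ⊢
  rw [withDensity_prod_gaussPdf N hv] at h ⊢
  have hgs : Measurable fun p : (Fin N → EuclideanSpace ℝ (Fin d)) × (Pairs N → ℕ) => g p.2 :=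
    hg.comp measurable_snd
  rw [Measure.lintegral_bind (aemeasurable_of_bind_ne_zero h) hgs.aemeasurable]
  refine lintegral_congr fun z => ?_
  rw [lintegral_map hgs measurable_prodMk_left]

variable {d N : ℕ} {β a v : ℝ} {α : Fin N → ℝ}

lemma coe_toNNReal_rexp_mk (hα : ∀ i j, α i + α j = a) (z : Fin N → EuclideanSpace ℝ (Fin d))
    {i j : Fin N} (hij : i ≠ j) :
    ((rexp (α (Pairs.mk hij).1.1 + α (Pairs.mk hij).1.2 -
      β * ‖z (Pairs.mk hij).1.1 - z (Pairs.mk hij).1.2‖ ^ 2)).toNNReal : ℝ≥0∞) =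
      ENNReal.ofReal (rexp a) * ENNReal.ofReal (rexp (-β * ‖z i - z j‖ ^ 2)) := by
  rw [← ENNReal.ofReal_mul (Real.exp_nonneg _), ← Real.exp_add, hα, ENNReal.ofReal]
  rw [show a + -β * ‖z i - z j‖ ^ 2 = a - β * ‖z i - z j‖ ^ 2 by ring]
  rcases le_total i j with h | h
  · simp [Pairs.mk, h]
  · simp [Pairs.mk, h, norm_sub_rev (z i)]

lemma card_subtype_ne (i : Fin N) : (Fintype.card {j // j ≠ i} : ℝ) = N - 1 := by
  have hN : 1 ≤ N := by have := i.2; omega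
  simp [Fintype.card_subtype_compl, Nat.cast_sub hN]

lemma lintegral_sum_jointLaw (hα : ∀ i j, α i + α j = a) (hβ : 0 < β) (hv : 0 < v)
    (h : jointLaw d N β α v ≠ 0) (i : Fin N) :
    ∫⁻ p, ∑ j : {j // j ≠ i}, (p.2 (Pairs.mk j.2.symm) : ℝ≥0∞) ∂jointLaw d N β α v =
      ENNReal.ofReal (((N : ℝ) - 1) * rexp a * (4 * v * β + 1) ^ (-(d : ℝ) / 2)) := by
  rw [lintegral_jointLaw_snd hv h
    (g := fun y => ∑ j : {j // j ≠ i}, (y (Pairs.mk j.2.symm) : ℝ≥0∞))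
    (Finset.measurable_sum _ fun j _ => measurable_natCast_eval _)]
  simp_rw [lintegral_sum_pi_poissonMeasure, coe_toNNReal_rexp_mk hα]
  rw [lintegral_finsetSum _ fun j _ => by fun_prop]
  have hj (j : {j // j ≠ i}) :
      ∫⁻ z, ENNReal.ofReal (rexp a) * ENNReal.ofReal (rexp (-β * ‖z i - z j‖ ^ 2))
          ∂Measure.pi (fun _ => gaussMeasure d v) =
        ENNReal.ofReal (rexp a) * ENNReal.ofReal ((1 + 4 * β * v) ^ (-(d : ℝ) / 2)) := by
    rw [lintegral_const_mul _ (by fun_prop), lintegral_pi_gaussMeasure_pair hv hβ.le j.2.symm]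
  simp_rw [hj]
  rw [Finset.sum_const, Finset.card_univ, nsmul_eq_mul, ← ENNReal.ofReal_natCast,
    card_subtype_ne, ← ENNReal.ofReal_mul (by positivity), ← ENNReal.ofReal_mul, ← mul_assoc,
    show 1 + 4 * β * v = 4 * v * β + 1 by ring]
  rw [← card_subtype_ne i]
  positivity

lemma lintegral_sum_sq_jointLaw (hα : ∀ i j, α i + α j = a) (hβ : 0 < β) (hv : 0 < v)
    (h : jointLaw d N β α v ≠ 0) (i : Fin N) :
    ∫⁻ p, (∑ j : {j // j ≠ i}, (p.2 (Pairs.mk j.2.symm) : ℝ≥0∞)) ^ 2 ∂jointLaw d N β α v =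
      ENNReal.ofReal (rexp (2 * a) * ((N : ℝ) - 1) * (8 * v * β + 1) ^ (-(d : ℝ) / 2) +
        ((N : ℝ) - 1) * ((N : ℝ) - 2) * rexp (2 * a) *
          (2 * v * β + 1) ^ (-(d : ℝ) / 2) * (6 * v * β + 1) ^ (-(d : ℝ) / 2) +
        ((N : ℝ) - 1) * rexp a * (4 * v * β + 1) ^ (-(d : ℝ) / 2)) := by
  set T₁ := rexp (2 * a) * (1 + 4 * (2 * β) * v) ^ (-(d : ℝ) / 2) with hT₁
  set T₂ := rexp (2 * a) *
    ((1 + 2 * β * v) ^ (-(d : ℝ) / 2) * (1 + 6 * β * v) ^ (-(d : ℝ) / 2)) with hT₂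
  have hpair (j k : {j // j ≠ i}) :
      ∫⁻ z, (ENNReal.ofReal (rexp a) * ENNReal.ofReal (rexp (-β * ‖z i - z j‖ ^ 2))) *
        (ENNReal.ofReal (rexp a) * ENNReal.ofReal (rexp (-β * ‖z i - z k‖ ^ 2)))
          ∂Measure.pi (fun _ => gaussMeasure d v) =
        ENNReal.ofReal (if j = k then T₁ else T₂) := by
    simp_rw [mul_mul_mul_comm (ENNReal.ofReal (rexp a)), ← ENNReal.ofReal_mul (Real.exp_nonneg a),
      ← Real.exp_add, ← two_mul]
    rw [lintegral_const_mul _ (by fun_prop)]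
    split_ifs with hjk
    · subst hjk
      simp_rw [← ENNReal.ofReal_mul (Real.exp_nonneg _), ← Real.exp_add, ← two_mul, ← mul_assoc,
        mul_neg]
      rw [lintegral_pi_gaussMeasure_pair hv (by positivity) j.2.symm,
        ← ENNReal.ofReal_mul (by positivity)]
    · rw [lintegral_pi_gaussMeasure_triple hv hβ.le j.2.symm k.2.symm
        (Subtype.coe_injective.ne hjk), ← ENNReal.ofReal_mul (by positivity)]
  have hmean := lintegral_sum_jointLaw hα hβ hv h i
  rw [lintegral_jointLaw_snd hv h
    (g := fun y => ∑ j : {j // j ≠ i}, (y (Pairs.mk j.2.symm) : ℝ≥0∞))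
    (Finset.measurable_sum _ fun j _ => measurable_natCast_eval _)] at hmean
  simp_rw [lintegral_sum_pi_poissonMeasure, coe_toNNReal_rexp_mk hα] at hmean
  rw [lintegral_jointLaw_snd hv h
    (g := fun y => (∑ j : {j // j ≠ i}, (y (Pairs.mk j.2.symm) : ℝ≥0∞)) ^ 2)
    ((Finset.measurable_sum _ fun j _ => measurable_natCast_eval _).pow_const 2)]
  simp_rw [lintegral_sum_sq_pi_poissonMeasure _ (Pairs.mk_injective i),
    coe_toNNReal_rexp_mk hα]
  have hm (j k : {j // j ≠ i}) : Measurable fun z : Fin N → EuclideanSpace ℝ (Fin d) =>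
      (ENNReal.ofReal (rexp a) * ENNReal.ofReal (rexp (-β * ‖z i - z j‖ ^ 2))) *
        (ENNReal.ofReal (rexp a) * ENNReal.ofReal (rexp (-β * ‖z i - z k‖ ^ 2))) := by
    fun_prop
  have hT (j k : {j // j ≠ i}) : 0 ≤ if j = k then T₁ else T₂ := by
    split_ifs <;> positivity
  rw [lintegral_add_right _ (by fun_prop), hmean,
    lintegral_finsetSum _ fun j _ => Finset.measurable_sum _ fun k _ => hm j k]
  simp_rw [lintegral_finsetSum _ fun (k : {j // j ≠ i}) _ => hm _ k, hpair]
  simp_rw [← ENNReal.ofReal_sum_of_nonneg fun (k : {j // j ≠ i}) _ => hT _ k]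
  rw [← ENNReal.ofReal_sum_of_nonneg fun j _ => Finset.sum_nonneg fun k _ => hT j k,
    ← ENNReal.ofReal_add (Finset.sum_nonneg fun j _ => Finset.sum_nonneg fun k _ => hT j k)]
  · congr 2
    have hite (j k : {j // j ≠ i}) :
        (if j = k then T₁ else T₂) = T₂ + if j = k then T₁ - T₂ else 0 := by
      split_ifs <;> ring
    simp_rw [hite, Finset.sum_add_distrib, Finset.sum_ite_eq, Finset.mem_univ, if_true,
      Finset.sum_const, Finset.card_univ, nsmul_eq_mul, card_subtype_ne, hT₁, hT₂]
    rw [show 1 + 4 * (2 * β) * v = 8 * v * β + 1 by ring,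
      show 1 + 2 * β * v = 2 * v * β + 1 by ring, show 1 + 6 * β * v = 6 * v * β + 1 by ring]
    ring
  · rw [← card_subtype_ne i]
    positivity

end LatentSpace

/-- Under the MS-LS model with `α_i + α_j = α` for all pairs, the conditional
variance of the nodal strength within state `k` equals
`e^{2α}(N-1)(8σ_k²β+1)^{-d/2} + (N-1)(N-2)e^{2α}(2σ_k²β+1)^{-d/2}(6σ_k²β+1)^{-d/2}
  + (N-1)e^α(4σ_k²β+1)^{-d/2} - (N-1)²e^{2α}(4σ_k²β+1)^{-d}`. -/
theorem statement12 {Ω : Type} [MeasurableSpace Ω] (M : MSLS Ω) (a : ℝ)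
    (hα : ∀ i j, M.α i + M.α j = a) (i : Fin M.N) (t : ℕ) (k : Fin M.K) :
    variance (fun ω => (M.strength i t ω : ℝ)) (M.P[|{ω | M.s t ω = k}]) =
      Real.exp (2 * a) * ((M.N : ℝ) - 1) * (8 * M.σ2 k * M.β + 1) ^ (-(M.d : ℝ) / 2) +
        ((M.N : ℝ) - 1) * ((M.N : ℝ) - 2) * Real.exp (2 * a) *
          (2 * M.σ2 k * M.β + 1) ^ (-(M.d : ℝ) / 2) *
          (6 * M.σ2 k * M.β + 1) ^ (-(M.d : ℝ) / 2) +
        ((M.N : ℝ) - 1) * Real.exp a * (4 * M.σ2 k * M.β + 1) ^ (-(M.d : ℝ) / 2) -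
        ((M.N : ℝ) - 1) ^ 2 * Real.exp (2 * a) * (4 * M.σ2 k * M.β + 1) ^ (-(M.d : ℝ)) := by
  set ν := M.P[|{ω | M.s t ω = k}] with hν
  have hv := M.σ2_pos k
  have hprob : IsProbabilityMeasure ν := cond_isProbabilityMeasure (M.state_pos t k)
  set T : Ω → (Fin M.N → EuclideanSpace ℝ (Fin M.d)) × (Pairs M.N → ℕ) :=
    fun ω => ((fun i => M.Z i k ω), fun p : Pairs M.N => M.Y p.1.1 p.1.2 t ω) with hT
  have hTm : Measurable T :=
    (measurable_pi_lambda _ fun i => M.Z_meas i k).prodMk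
      (measurable_pi_lambda _ fun p => M.Y_meas _ _ t)
  have hlaw : ν.map T = jointLaw M.d M.N M.β M.α (M.σ2 k) := M.cond_law_state t k
  have hJ : jointLaw M.d M.N M.β M.α (M.σ2 k) ≠ 0 := by
    rw [← hlaw]
    have := Measure.isProbabilityMeasure_map (μ := ν) hTm.aemeasurable
    exact IsProbabilityMeasure.ne_zero _
  have hS (ω : Ω) : ENNReal.ofReal (M.strength i t ω : ℝ) =
      ∑ j : {j // j ≠ i}, ((T ω).2 (Pairs.mk j.2.symm) : ℝ≥0∞) := by
    rw [ENNReal.ofReal_natCast, M.strength_eq_sum, Nat.cast_sum]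
  have hSm : Measurable fun ω => (M.strength i t ω : ℝ) := by
    unfold MSLS.strength
    exact measurable_from_nat.comp (Finset.measurable_sum _ fun j _ => M.Y_meas i j t)
  have hsum : Measurable fun p : (Fin M.N → EuclideanSpace ℝ (Fin M.d)) × (Pairs M.N → ℕ) =>
      ∑ j : {j // j ≠ i}, (p.2 (Pairs.mk j.2.symm) : ℝ≥0∞) :=
    Finset.measurable_sum _ fun j _ => (measurable_natCast_eval _).comp measurable_snd
  have h1 := lintegral_sum_jointLaw hα M.β_pos hv hJ i
  rw [← hlaw, lintegral_map hsum hTm] at h1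
  simp_rw [← hS] at h1
  have h2 := lintegral_sum_sq_jointLaw hα M.β_pos hv hJ i
  rw [← hlaw, lintegral_map (hsum.pow_const 2) hTm] at h2
  simp_rw [← hS, ← ENNReal.ofReal_pow (Nat.cast_nonneg _)] at h2
  have hL : MemLp (fun ω => (M.strength i t ω : ℝ)) 2 ν := by
    rw [memLp_two_iff_integrable_sq hSm.aestronglyMeasurable]
    refine (lintegral_ofReal_ne_top_iff_integrable (hSm.pow_const 2).aestronglyMeasurable
      (ae_of_all _ fun ω => sq_nonneg _)).1 ?_
    rw [h2]
    exact ENNReal.ofReal_ne_top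
  have hβ := M.β_pos
  have hN := card_subtype_ne i
  rw [variance_eq_sub hL]
  simp only [Pi.pow_apply]
  rw [integral_eq_lintegral_of_nonneg_ae (ae_of_all _ fun ω => sq_nonneg _)
      (hSm.pow_const 2).aestronglyMeasurable, h2,
    integral_eq_lintegral_of_nonneg_ae (ae_of_all _ fun ω => Nat.cast_nonneg _)
      hSm.aestronglyMeasurable, h1, ENNReal.toReal_ofReal, ENNReal.toReal_ofReal]
  · have hpow : (4 * M.σ2 k * M.β + 1) ^ (-(M.d : ℝ)) =
        ((4 * M.σ2 k * M.β + 1) ^ (-(M.d : ℝ) / 2)) ^ 2 := by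
      rw [← Real.rpow_natCast, ← Real.rpow_mul (by positivity)]
      congr 1
      push_cast
      ring
    have hexp : rexp (2 * a) = rexp a ^ 2 := by
      rw [← Real.exp_nat_mul]
      push_cast
      rfl
    rw [hpow, hexp]
    ring
  · rw [← hN]
    positivity
  · have hNN : 0 ≤ ((M.N : ℝ) - 1) * ((M.N : ℝ) - 2) := by
      rw [show (M.N : ℝ) - 2 = (M.N - 1 : ℝ) - 1 by ring, ← hN]
      rcases Nat.eq_zero_or_pos (Fintype.card {j // j ≠ i}) with h0 | h0
      · simp [h0]
      · have : (1 : ℝ) ≤ Fintype.card {j // j ≠ i} := by exact_mod_cast h0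
        exact mul_nonneg (by positivity) (by linarith)
    have hN1 : 0 ≤ (M.N : ℝ) - 1 := by rw [← hN]; positivity
    positivity
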